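/- arXiv:1211.4208 — 2 statements merged into one kernel-verified Lean document; each statement's English description precedes it below -/
import Mathlib

section
/- Let G be a group, let U, V ⊆ G be finite nonempty sets, and let C ⊆ U and D ⊆ V. Then there exists ϑ ∈ U such that |ϑD ∩ C|/|V| ≥ (|C|/|U|)·(|D|/|V|) − max_{d ∈ D} |Ud △ U|/|U| (where for D empty the maximum is taken to be 0). -/
/-!
The proof averages `|ϑD ∩ C|` over `ϑ ∈ U`. Counting the pairs `(ϑ, d) ∈ U × D` with `ϑd ∈ C` in
two ways gives `∑ ϑ ∈ U, |ϑD ∩ C| = ∑ d ∈ D, |Ud ∩ C|` (`sum_card_translate_inter`). Since `C ⊆ U`,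
the set `Ud` misses at most `|Ud ∆ U|` elements of `C` (`card_le_card_inter_add`), so with `M` the
maximum of `|Ud ∆ U|` over `d ∈ D` the sum is at least `|D| (|C| - M)`. Some `ϑ` attains
at least the average `|D| (|C| - M) / |U|`; dividing by `|V|` and using `|D| ≤ |V|` on the error
term gives the bound.
-/

open scoped symmDiff

/-- Double counting of the pairs `(u, d) ∈ U × D` with `u * d ∈ C`. -/
lemma sum_card_translate_inter {G : Type*} [Group G] [DecidableEq G] (U C D : Finset G) :
    ∑ u ∈ U, (D.image (u * ·) ∩ C).card = ∑ d ∈ D, (U.image (· * d) ∩ C).card := by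
  have h1 : ∀ u, (D.image (u * ·) ∩ C).card = (D.filter fun d => u * d ∈ C).card := by
    intro u
    rw [← Finset.filter_mem_eq_inter, Finset.filter_image,
      Finset.card_image_of_injective _ (mul_right_injective u)]
  have h2 : ∀ d, (U.image (· * d) ∩ C).card = (U.filter fun u => u * d ∈ C).card := by
    intro d
    rw [← Finset.filter_mem_eq_inter, Finset.filter_image,
      Finset.card_image_of_injective _ (mul_left_injective d)]
  simp only [h1, h2]
  exact Finset.sum_card_bipartiteAbove_eq_sum_card_bipartiteBelow _

lemma card_le_card_inter_add {α : Type*} [DecidableEq α] {C U : Finset α} (hC : C ⊆ U)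
    (W : Finset α) : C.card ≤ (W ∩ C).card + (W ∆ U).card := by
  refine (Finset.card_le_card ?_).trans (Finset.card_union_le _ _)
  intro x hx
  have := hC hx
  by_cases hW : x ∈ W <;> simp [Finset.mem_symmDiff, *]

/-- Lemma 2.3 (2), finite form. For finite nonempty `U, V ⊆ G` and `C ⊆ U`, `D ⊆ V`, there is
`ϑ ∈ U` with `|ϑD ∩ C|/|V| ≥ (|C|/|U|)·(|D|/|V|) − max_{d ∈ D} |Ud ∆ U|/|U|`
(the maximum being `0` when `D` is empty). -/
theorem stmt2 {G : Type*} [Group G] [DecidableEq G]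
    (U V : Finset G) (hU : U.Nonempty) (hV : V.Nonempty)
    (C D : Finset G) (hC : C ⊆ U) (hD : D ⊆ V) :
    ∃ ϑ ∈ U,
      ((C.card : ℝ) / U.card) * ((D.card : ℝ) / V.card)
          - ((D.sup fun d => ((U.image (· * d)) ∆ U).card : ℕ) : ℝ) / U.card
        ≤ ((D.image (ϑ * ·) ∩ C).card : ℝ) / V.card := by
  set M := D.sup fun d => ((U.image (· * d)) ∆ U).card with hM
  have hsum : D.card * C.card ≤ (∑ u ∈ U, (D.image (u * ·) ∩ C).card) + D.card * M := by
    rw [sum_card_translate_inter, ← smul_eq_mul D.card M, ← Finset.sum_const,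
      ← Finset.sum_add_distrib, ← smul_eq_mul, ← Finset.sum_const]
    refine Finset.sum_le_sum fun d hd => (card_le_card_inter_add hC (U.image (· * d))).trans ?_
    gcongr
    exact Finset.le_sup (f := fun d => ((U.image (· * d)) ∆ U).card) hd
  have hU0 : (0 : ℝ) < U.card := by exact_mod_cast hU.card_pos
  have hV0 : (0 : ℝ) < V.card := by exact_mod_cast hV.card_pos
  have hDV : (D.card : ℝ) ≤ V.card := by exact_mod_cast Finset.card_le_card hD
  have hsumR : (D.card : ℝ) * C.card - D.card * M
      ≤ ∑ u ∈ U, ((D.image (u * ·) ∩ C).card : ℝ) := by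
    have : (D.card : ℝ) * C.card
        ≤ (∑ u ∈ U, ((D.image (u * ·) ∩ C).card : ℝ)) + D.card * M := by exact_mod_cast hsum
    linarith
  obtain ⟨ϑ, hϑ, h⟩ := Finset.exists_le_of_sum_le (s := U)
    (f := fun _ => ((D.card : ℝ) * C.card - D.card * M) / U.card)
    (g := fun u => ((D.image (u * ·) ∩ C).card : ℝ)) hU (by
      rw [Finset.sum_const, nsmul_eq_mul, mul_div_cancel₀ _ hU0.ne']
      exact hsumR)
  refine ⟨ϑ, hϑ, le_trans ?_ (div_le_div_of_nonneg_right h hV0.le)⟩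
  -- `|D| ≤ |V|` absorbs the factor `|D| / |V|` that averaging leaves on the error term.
  have hDM : (D.card : ℝ) * M / V.card ≤ M := by
    rw [div_le_iff₀ hV0, mul_comm]
    gcongr
  calc (C.card : ℝ) / U.card * (D.card / V.card) - M / U.card
      ≤ (C.card : ℝ) / U.card * (D.card / V.card) - (D.card * M / V.card) / U.card := by gcongr
    _ = ((D.card : ℝ) * C.card - D.card * M) / U.card / V.card := by
      field_simp
end

section
/- Let G be a countable amenable group and suppose A_1, …, A_n ⊆ G have positive Banach densities d(A_i) = α_i. Then there exists B ⊆ G such that d(B) ≥ α_1·α_2⋯α_n and B is finitely embeddable in A_i (B ◁ A_i) for every i = 1, …, n. Consequently BB⁻¹ ⊆ ⋂_{i=1}^n A_iA_i⁻¹ and Δ_ε(B) ⊆ ⋂_{i=1}^n Δ_ε(A_i) for every ε ≥ 0. -/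
/-! Finite embeddability is transitive, so by induction on the number of sets everything reduces to
one step: given `A` and `B`, find `C ⊆ B` with `C ◁ A` and `d(C) ≥ d(A) d(B)`.

For this step, sets are regarded as points of the compact metrizable space `G → Bool`. Let `K m` be
a Følner sequence along which the density of `A` tends to `d(A)`, and let `μ` be a weak limit of the
uniform distributions on the translates `A x⁻¹`, `x ∈ K m`. Left invariance of `K m` gives
`μ {D | g ∈ D} ≥ d(A)` for every `g`, and `μ`-almost every `D` satisfies `D ◁ A`, since a finite set
without right translate in `A` is contained in no `A x⁻¹` (`exists_measure`). If `L m` is a Følner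
sequence along which the density of `B` tends to `d(B)`, then the expected density of `D ∩ B` in
`L m` is at least `d(A) |B ∩ L m| / |L m|`. By the reverse Fatou lemma some `D ◁ A` has
`limsup |D ∩ B ∩ L m| / |L m| ≥ d(A) d(B)`, and `C = D ∩ B` is as required (`exists_step`).

The inclusions for `BB⁻¹` and `Δ_ε(B)` are formal: `B ◁ A` implies `B ∩ gB ◁ A ∩ gA`, and `d` is
monotone under `◁` because right translates of `(H, ε)`-invariant sets are `(H, ε)`-invariant. -/

open scoped Pointwise symmDiff

variable {G : Type*}

/-- `K` is a nonempty finite `(H, ε)`-invariant set: `|hK ∆ K| < ε|K|` for all `h ∈ H`. -/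
def IsFolnerInvariant [Group G] [DecidableEq G] (H : Finset G) (ε : ℝ) (K : Finset G) : Prop :=
  K.Nonempty ∧ ∀ h ∈ H, (((K.image (h * ·)) ∆ K).card : ℝ) < ε * K.card

/-- Følner's condition: for every finite `H ⊆ G` and `ε > 0` there is a nonempty finite
`(H, ε)`-invariant set. -/
def IsAmenable (G : Type*) [Group G] [DecidableEq G] : Prop :=
  ∀ (H : Finset G) (ε : ℝ), 0 < ε → ∃ K : Finset G, IsFolnerInvariant H ε K

/-- The (upper) Banach density of `A ⊆ G`: the least upper bound of the `α` such that for every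
finite `H ⊆ G` and every `ε > 0` some nonempty finite `(H, ε)`-invariant `K` satisfies
`|A ∩ K|/|K| ≥ α`. -/
noncomputable def banachDensity [Group G] [DecidableEq G] (A : Set G) : ℝ :=
  sSup {α : ℝ | ∀ (H : Finset G) (ε : ℝ), 0 < ε →
    ∃ K : Finset G, IsFolnerInvariant H ε K ∧ α ≤ ((A ∩ ↑K).ncard : ℝ) / K.card}

/-- The lower Banach density of `A ⊆ G`: the least upper bound of the `α` such that for some
finite `H ⊆ G` and some `ε > 0` every nonempty finite `(H, ε)`-invariant `K` satisfies
`|A ∩ K|/|K| ≥ α`. -/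
noncomputable def lowerBanachDensity [Group G] [DecidableEq G] (A : Set G) : ℝ :=
  sSup {α : ℝ | ∃ (H : Finset G) (ε : ℝ), 0 < ε ∧
    ∀ K : Finset G, IsFolnerInvariant H ε K → α ≤ ((A ∩ ↑K).ncard : ℝ) / K.card}

/-- The `ε`-density Delta-set `Δ_ε(A) = {g ∈ G : d(A ∩ gA) > ε}`. -/
noncomputable def deltaSet [Group G] [DecidableEq G] (ε : ℝ) (A : Set G) : Set G :=
  {g | ε < banachDensity (A ∩ (g * ·) '' A)}

/-- `S ⊆ G` is thick if every finite subset of `G` has a right translate inside `S`. -/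
def Thick [Group G] (S : Set G) : Prop :=
  ∀ H : Finset G, ∃ x : G, ∀ h ∈ H, h * x ∈ S

/-- `S ⊆ G` is `k`-syndetic if `G = F·S` for some finite `F` with `|F| ≤ k`. -/
def IsSyndetic [Group G] (k : ℕ) (S : Set G) : Prop :=
  ∃ F : Finset G, F.card ≤ k ∧ ∀ g : G, g ∈ (↑F : Set G) * S

/-- `S ⊆ G` is piecewise `k`-syndetic if `F·S` is thick for some finite `F` with `|F| ≤ k`. -/
def PiecewiseSyndetic [Group G] (k : ℕ) (S : Set G) : Prop :=
  ∃ F : Finset G, F.card ≤ k ∧ Thick ((↑F : Set G) * S)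

/-- `A` is finitely embeddable in `B` (`A ◁ B`): every finite subset of `A` has a right
translate contained in `B`. -/
def FinEmbeddable [Group G] (A B : Set G) : Prop :=
  ∀ H : Finset G, ↑H ⊆ A → ∃ x : G, ∀ h ∈ H, h * x ∈ B


open MeasureTheory Filter Topology

/-! ### Banach density and finite embeddability -/

lemma finEmbeddable_of_subset [Group G] {A B : Set G} (h : A ⊆ B) : FinEmbeddable A B :=
  fun _ hH => ⟨1, fun g hg => by rw [mul_one]; exact h (hH hg)⟩

section Density

variable [Group G] [DecidableEq G]

/-- The set whose supremum is the Banach density is bounded above by `1`. -/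
lemma bddAbove_density (A : Set G) :
    BddAbove {α : ℝ | ∀ (H : Finset G) (ε : ℝ), 0 < ε →
      ∃ K : Finset G, IsFolnerInvariant H ε K ∧ α ≤ ((A ∩ ↑K).ncard : ℝ) / K.card} := by
  refine ⟨1, fun a ha => ?_⟩
  obtain ⟨K, hK, h⟩ := ha ∅ 1 one_pos
  refine h.trans (div_le_one_of_le₀ ?_ (by positivity))
  have := Set.ncard_le_ncard (Set.inter_subset_right (s := A) (t := (K : Set G))) K.finite_toSet
  rw [Set.ncard_coe_finset] at this
  exact_mod_cast this

lemma le_banachDensity {A : Set G} {a : ℝ}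
    (h : ∀ (H : Finset G) (ε : ℝ), 0 < ε →
      ∃ K : Finset G, IsFolnerInvariant H ε K ∧ a ≤ ((A ∩ ↑K).ncard : ℝ) / K.card) :
    a ≤ banachDensity A :=
  le_csSup (bddAbove_density A) h

lemma zero_mem_density (hG : IsAmenable G) (A : Set G) (H : Finset G) (ε : ℝ) (hε : 0 < ε) :
    ∃ K : Finset G, IsFolnerInvariant H ε K ∧ (0 : ℝ) ≤ ((A ∩ ↑K).ncard : ℝ) / K.card := by
  obtain ⟨K, hK⟩ := hG H ε hε
  exact ⟨K, hK, by positivity⟩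

lemma exists_folner_of_lt (hG : IsAmenable G) {A : Set G} {a : ℝ} (ha : a < banachDensity A)
    (H : Finset G) (ε : ℝ) (hε : 0 < ε) :
    ∃ K : Finset G, IsFolnerInvariant H ε K ∧ a ≤ ((A ∩ ↑K).ncard : ℝ) / K.card := by
  unfold banachDensity at ha
  obtain ⟨b, hb, hab⟩ := exists_lt_of_lt_csSup (by exact ⟨0, zero_mem_density hG A⟩) ha
  obtain ⟨K, hK, h⟩ := hb H ε hε
  exact ⟨K, hK, hab.le.trans h⟩

lemma one_le_banachDensity_univ (hG : IsAmenable G) : 1 ≤ banachDensity (Set.univ : Set G) := by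
  refine le_banachDensity fun H ε hε => ?_
  obtain ⟨K, hK⟩ := hG H ε hε
  refine ⟨K, hK, ?_⟩
  have : (K.card : ℝ) ≠ 0 := by exact_mod_cast hK.1.card_pos.ne'
  rw [Set.univ_inter, Set.ncard_coe_finset, div_self this]

/-- Left invariance is preserved by right translation. -/
lemma IsFolnerInvariant.mul_right {H K : Finset G} {ε : ℝ} (hK : IsFolnerInvariant H ε K) (x : G) :
    IsFolnerInvariant H ε (K.image (· * x)) := by
  have hinj : Function.Injective (· * x : G → G) := mul_left_injective x
  refine ⟨hK.1.image _, fun h hh => ?_⟩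
  have e : (K.image (· * x)).image (h * ·) = (K.image (h * ·)).image (· * x) := by
    simp only [Finset.image_image, Function.comp_def, mul_assoc]
  rw [e, ← Finset.image_symmDiff _ _ hinj, Finset.card_image_of_injective _ hinj,
    Finset.card_image_of_injective _ hinj]
  exact hK.2 h hh

lemma FinEmbeddable.trans {A B C : Set G} (h₁ : FinEmbeddable A B) (h₂ : FinEmbeddable B C) :
    FinEmbeddable A C := by
  intro H hH
  obtain ⟨x, hx⟩ := h₁ H hH
  obtain ⟨y, hy⟩ := h₂ (H.image (· * x)) (by
    intro z hz
    obtain ⟨w, hw, rfl⟩ := Finset.mem_image.1 (Finset.mem_coe.1 hz)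
    exact hx w hw)
  exact ⟨x * y, fun h hh => by
    rw [← mul_assoc]; exact hy _ (Finset.mem_image_of_mem _ hh)⟩

/-- A right translate of an invariant set witnessing the density of `C` witnesses at least the same
density for `A`. -/
lemma FinEmbeddable.banachDensity_le (hG : IsAmenable G) {C A : Set G} (h : FinEmbeddable C A) :
    banachDensity C ≤ banachDensity A := by
  classical
  unfold banachDensity
  refine csSup_le_csSup (bddAbove_density A) ⟨0, zero_mem_density hG C⟩ fun a ha H ε hε => ?_
  obtain ⟨K, hK, haK⟩ := ha H ε hε
  obtain ⟨x, hx⟩ := h (K.filter (· ∈ C)) (by intro z hz; simpa using (Finset.mem_filter.1 hz).2)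
  have hinj : Function.Injective (· * x : G → G) := mul_left_injective x
  refine ⟨_, hK.mul_right x, haK.trans ?_⟩
  rw [Finset.card_image_of_injective _ hinj]
  refine div_le_div_of_nonneg_right (Nat.cast_le.2 ?_) (by positivity)
  rw [← Set.ncard_image_of_injective (C ∩ ↑K) hinj]
  refine Set.ncard_le_ncard ?_ ((Finset.finite_toSet _).subset Set.inter_subset_right)
  rintro _ ⟨z, ⟨hzC, hzK⟩, rfl⟩
  have hzK' : z ∈ K := hzK
  exact ⟨hx z (Finset.mem_filter.2 ⟨hzK', hzC⟩),
    Finset.mem_coe.2 (Finset.mem_image_of_mem _ hzK')⟩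

lemma FinEmbeddable.inter_translate {B A : Set G} (h : FinEmbeddable B A) (g : G) :
    FinEmbeddable (B ∩ (g * ·) '' B) (A ∩ (g * ·) '' A) := by
  intro H hH
  obtain ⟨x, hx⟩ := h (H ∪ H.image (g⁻¹ * ·)) (by
    intro z hz
    rcases Finset.mem_union.1 (Finset.mem_coe.1 hz) with hz | hz
    · exact (hH hz).1
    · obtain ⟨w, hw, rfl⟩ := Finset.mem_image.1 hz
      obtain ⟨b, hb, hbw⟩ := (hH hw).2
      have : g⁻¹ * w = b := by rw [← hbw]; simp
      simpa [this] using hb)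
  refine ⟨x, fun w hw => ⟨hx w (Finset.mem_union_left _ hw), g⁻¹ * w * x, ?_, ?_⟩⟩
  · exact hx _ (Finset.mem_union_right _ (Finset.mem_image_of_mem _ hw))
  · simp [mul_assoc]

lemma FinEmbeddable.mul_inv_subset {B A : Set G} (h : FinEmbeddable B A) :
    B * B⁻¹ ⊆ A * A⁻¹ := by
  rintro _ ⟨b, hb, c, hc, rfl⟩
  obtain ⟨x, hx⟩ := h {b, c⁻¹} (by
    intro z hz
    simp only [Finset.coe_insert, Finset.coe_singleton, Set.mem_insert_iff,
      Set.mem_singleton_iff] at hz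
    rcases hz with rfl | rfl
    · exact hb
    · exact hc)
  refine ⟨b * x, hx b (by simp), (c⁻¹ * x)⁻¹, ?_, ?_⟩
  · simpa using hx c⁻¹ (by simp)
  · simp

/-- There is a Følner sequence along which the relative density of `A` is asymptotically at least
`d(A)`. -/
lemma exists_folner_seq [Countable G] (hG : IsAmenable G) (A : Set G) :
    ∃ K : ℕ → Finset G, (∀ m, (K m).Nonempty) ∧
      (∀ (H : Finset G) (ε : ℝ), 0 < ε → ∀ᶠ m in atTop, IsFolnerInvariant H ε (K m)) ∧
      ∀ m : ℕ, banachDensity A - 1 / ((m : ℝ) + 1) ≤ ((A ∩ ↑(K m)).ncard : ℝ) / (K m).card := by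
  obtain ⟨e, he⟩ := exists_surjective_nat G
  have key : ∀ m : ℕ, ∃ K : Finset G,
      IsFolnerInvariant ((Finset.range m).image e) (1 / ((m : ℝ) + 1)) K ∧
      banachDensity A - 1 / ((m : ℝ) + 1) ≤ ((A ∩ ↑K).ncard : ℝ) / K.card := fun m =>
    exists_folner_of_lt hG (sub_lt_self _ (by positivity)) _ _ (by positivity)
  choose K hK hKA using key
  refine ⟨K, fun m => (hK m).1, fun H ε hε => ?_, hKA⟩
  have h1 : ∀ᶠ m : ℕ in atTop, ∀ h ∈ H, h ∈ (Finset.range m).image e := by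
    rw [Finset.eventually_all]
    intro h _
    obtain ⟨k, rfl⟩ := he h
    filter_upwards [eventually_gt_atTop k] with m hm
    exact Finset.mem_image_of_mem _ (Finset.mem_range.2 hm)
  have h2 : ∀ᶠ m : ℕ in atTop, 1 / ((m : ℝ) + 1) < ε :=
    tendsto_one_div_add_atTop_nhds_zero_nat.eventually_lt_const hε
  filter_upwards [h1, h2] with m hm hm'
  exact ⟨(hK m).1, fun h hh => ((hK m).2 h (hm h hh)).trans_le (by gcongr)⟩

/-- Left invariance makes `{x ∈ K | g x ∈ A}` almost as large as `A ∩ K`. -/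
lemma density_translate_ge {A : Set G} {K : Finset G} {g : G} {ε : ℝ}
    (hK : IsFolnerInvariant {g} ε K) :
    ((A ∩ ↑K).ncard : ℝ) / K.card - ε ≤ ({x ∈ (K : Set G) | g * x ∈ A}.ncard : ℝ) / K.card := by
  have hpos : (0 : ℝ) < K.card := by exact_mod_cast hK.1.card_pos
  have hfin : {x ∈ (K : Set G) | g * x ∈ A}.Finite := K.finite_toSet.subset (Set.sep_subset _ _)
  have hsub : A ∩ ↑K ⊆ (g * ·) '' {x ∈ (K : Set G) | g * x ∈ A} ∪
      ↑((K.image (g * ·)) ∆ K) := by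
    rintro z ⟨hzA, hzK⟩
    by_cases hz : z ∈ K.image (g * ·)
    · obtain ⟨x, hx, rfl⟩ := Finset.mem_image.1 hz
      exact Or.inl ⟨x, ⟨hx, hzA⟩, rfl⟩
    · exact Or.inr (Finset.mem_coe.2 (Finset.mem_symmDiff.2 (Or.inr ⟨hzK, hz⟩)))
  have h1 := (Set.ncard_le_ncard hsub ((hfin.image _).union (Finset.finite_toSet _))).trans
    (Set.ncard_union_le _ _)
  rw [Set.ncard_coe_finset, Set.ncard_image_of_injective _ (mul_right_injective g)] at h1
  have h2 := hK.2 g (by simp)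
  have h3 : ((A ∩ ↑K).ncard : ℝ) ≤ ({x ∈ (K : Set G) | g * x ∈ A}.ncard : ℝ) +
    ((K.image (g * ·)) ∆ K).card := by exact_mod_cast h1
  rw [sub_le_iff_le_add, ← sub_le_iff_le_add', ← sub_div, div_le_iff₀ hpos]
  linarith

end Density

/-! ### Random limits of translates of a set -/

lemma isClopen_forall_mem (F : Finset G) : IsClopen {D : G → Bool | ∀ g ∈ F, D g = true} := by
  have : {D : G → Bool | ∀ g ∈ F, D g = true} = ⋂ g ∈ F, (fun D : G → Bool => D g) ⁻¹' {true} := by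
    ext; simp
  rw [this]
  exact isClopen_biInter_finset fun g _ => (isClopen_discrete _).preimage (continuous_apply g)

open Classical in
/-- The uniform distribution on the translates `A x⁻¹`, `x ∈ K`, as a probability measure on
`G → Bool`. -/
noncomputable def empirical [Group G] (A : Set G) (K : Finset G) (hK : K.Nonempty) :
    ProbabilityMeasure (G → Bool) :=
  ⟨((PMF.uniformOfFinset K hK).map fun x g => decide (g * x ∈ A)).toMeasure, inferInstance⟩

lemma empirical_apply [Group G] (A : Set G) (K : Finset G) (hK : K.Nonempty) (F : Finset G)
    (hF : MeasurableSet {D : G → Bool | ∀ g ∈ F, D g = true}) :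
    (empirical A K hK {D : G → Bool | ∀ g ∈ F, D g = true} : ℝ) =
      ({x ∈ (K : Set G) | ∀ g ∈ F, g * x ∈ A}.ncard : ℝ) / K.card := by
  classical
  -- Every subset of `G` is declared measurable, so that the map `x ↦ A x⁻¹` is measurable.
  let _ : MeasurableSpace G := ⊤
  have h : (empirical A K hK : Measure (G → Bool)) {D : G → Bool | ∀ g ∈ F, D g = true} =
      ((K.filter fun x => ∀ g ∈ F, g * x ∈ A).card : ENNReal) / K.card := by
    rw [empirical, ProbabilityMeasure.coe_mk, PMF.toMeasure_map_apply _ _ _ measurable_from_top hF,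
      PMF.toMeasure_uniformOfFinset_apply _ _ MeasurableSpace.measurableSet_top]
    simp
  have h' : {x ∈ (K : Set G) | ∀ g ∈ F, g * x ∈ A} =
      ↑(K.filter fun x => ∀ g ∈ F, g * x ∈ A) := by ext; simp
  rw [h', Set.ncard_coe_finset, ProbabilityMeasure.coeFn_def, ← ENNReal.toReal, h]
  simp

section Correspondence

variable [Group G] [DecidableEq G] [Countable G]

/-- A Furstenberg-type correspondence: there is a random subset of `G` which is almost surely
finitely embeddable in `A` and contains each element with probability at least `d(A)`. -/
lemma exists_measure (hG : IsAmenable G) (A : Set G) :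
    ∃ μ : ProbabilityMeasure (G → Bool),
      (∀ g, banachDensity A ≤ μ {D | D g = true}) ∧
      ∀ᵐ D ∂(μ : Measure (G → Bool)), FinEmbeddable {g | D g = true} A := by
  obtain ⟨K, hne, hK, hKA⟩ := exists_folner_seq hG A
  let u : Ultrafilter ℕ := hyperfilter ℕ
  have hu : (u : Filter ℕ) ≤ atTop := Nat.hyperfilter_le_atTop
  let ν : ℕ → ProbabilityMeasure (G → Bool) := fun m => empirical A (K m) (hne m)
  let μ := (u.map ν).lim
  have hμ : Tendsto ν u (𝓝 μ) := (u.map ν).le_nhds_lim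
  have hlim : ∀ F : Finset G, Tendsto
      (fun m => ({x ∈ (K m : Set G) | ∀ g ∈ F, g * x ∈ A}.ncard : ℝ) / (K m).card) u
      (𝓝 (μ {D | ∀ g ∈ F, D g = true} : ℝ)) := fun F => by
    have h := ProbabilityMeasure.tendsto_measure_of_isClopen_of_tendsto hμ (isClopen_forall_mem F)
    refine (NNReal.tendsto_coe.2 h).congr fun m => ?_
    exact empirical_apply A (K m) (hne m) F (isClopen_forall_mem F).isOpen.measurableSet
  refine ⟨μ, fun g => ?_, ?_⟩
  · refine le_of_forall_pos_le_add fun ε hε => ?_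
    have h := hlim {g}
    simp only [Finset.mem_singleton, forall_eq] at h
    rw [← sub_le_iff_le_add]
    refine ge_of_tendsto h (hu ?_)
    have h2 : ∀ᶠ m : ℕ in atTop, 1 / ((m : ℝ) + 1) < ε / 2 :=
      tendsto_one_div_add_atTop_nhds_zero_nat.eventually_lt_const (half_pos hε)
    filter_upwards [hK {g} (ε / 2) (half_pos hε), h2] with m hm hm'
    have := density_translate_ge (A := A) hm
    have := hKA m
    linarith
  · have : ∀ᵐ D ∂(μ : Measure (G → Bool)), ∀ F : Finset G,
        (¬ ∃ x : G, ∀ g ∈ F, g * x ∈ A) → ¬ ∀ g ∈ F, D g = true := by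
      rw [ae_all_iff]
      intro F
      by_cases hF : ∃ x : G, ∀ g ∈ F, g * x ∈ A
      · exact Eventually.of_forall fun D h => absurd hF h
      have h0 : (μ {D | ∀ g ∈ F, D g = true} : ℝ) = 0 := by
        refine tendsto_nhds_unique (hlim F) (tendsto_const_nhds.congr fun m => ?_)
        have : {x ∈ (K m : Set G) | ∀ g ∈ F, g * x ∈ A} = ∅ := by
          ext x
          simpa using fun _ => by simpa using not_exists.1 hF x
        simp only [this, Set.ncard_empty, Nat.cast_zero, zero_div]
      have h1 : (μ : Measure (G → Bool)) {D | ∀ g ∈ F, D g = true} = 0 :=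
        (ProbabilityMeasure.null_iff_toMeasure_null μ _).1 (by exact_mod_cast h0)
      have := measure_eq_zero_iff_ae_notMem.1 h1
      filter_upwards [this] with D hD _
      exact hD
    filter_upwards [this] with D hD H hH
    by_contra hcon
    exact hD H hcon fun g hg => hH hg

/-- The induction step: two sets have a common finitely embeddable set whose density is at least
the product of their densities. It is the intersection of `B` with a suitable random limit of
translates of `A`. -/
lemma exists_step (hG : IsAmenable G) (A B : Set G) (hA : 0 < banachDensity A) :
    ∃ C ⊆ B, FinEmbeddable C A ∧ banachDensity A * banachDensity B ≤ banachDensity C := by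
  classical
  obtain ⟨μ, hμ, hae⟩ := exists_measure hG A
  obtain ⟨L, hne, hL, hLB⟩ := exists_folner_seq hG B
  set a := banachDensity A
  set b := banachDensity B
  let S : ℕ → Finset G := fun m => (L m).filter (· ∈ B)
  have hS : ∀ m, ((B ∩ ↑(L m)).ncard : ℝ) = (S m).card := fun m => by
    rw [← Set.ncard_coe_finset]; congr 2; ext; simp [S, and_comm]
  let U : G → Set (G → Bool) := fun g => {D | D g = true}
  have hU : ∀ g, MeasurableSet (U g) := fun g =>
    measurableSet_eq_fun (measurable_pi_apply g) measurable_const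
  -- `f m D` is the relative density of `D ∩ B` in `L m`.
  let f : ℕ → (G → Bool) → ENNReal := fun m D =>
    (∑ g ∈ S m, (U g).indicator 1 D) * ((L m).card : ENNReal)⁻¹
  have hcard : ∀ m, ((L m).card : ENNReal) ≠ 0 := fun m => by
    exact_mod_cast (hne m).card_pos.ne'
  have hfval : ∀ m D, f m D =
      ENNReal.ofReal ((({g | D g = true} ∩ B ∩ ↑(L m)).ncard : ℝ) / (L m).card) := fun m D => by
    have hpos : (0 : ℝ) < (L m).card := by exact_mod_cast (hne m).card_pos
    have e : {g | D g = true} ∩ B ∩ ↑(L m) = ↑((S m).filter fun g => D g = true) := by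
      ext; simp [S]; tauto
    rw [ENNReal.ofReal_div_of_pos hpos, e, Set.ncard_coe_finset, ENNReal.ofReal_natCast,
      ENNReal.ofReal_natCast, div_eq_mul_inv]
    simp [f, U, Set.indicator_apply]
  have hfm : ∀ m, Measurable (f m) := fun m =>
    (Finset.measurable_fun_sum _ fun g _ => measurable_one.indicator (hU g)).mul_const _
  have hf1 : ∀ m D, f m D ≤ 1 := fun m D => by
    rw [hfval]
    refine ENNReal.ofReal_le_one.2 (div_le_one_of_le₀ ?_ (by positivity))
    have := Set.ncard_le_ncard (Set.inter_subset_right (s := {g | D g = true} ∩ B)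
      (t := (L m : Set G))) (L m).finite_toSet
    rw [Set.ncard_coe_finset] at this
    exact_mod_cast this
  have hint : ∀ m : ℕ, ENNReal.ofReal (a * (b - 1 / ((m : ℝ) + 1))) ≤
      ∫⁻ D, f m D ∂(μ : Measure (G → Bool)) := fun m => by
    have hpos : (0 : ℝ) < (L m).card := by exact_mod_cast (hne m).card_pos
    have h1 : ∀ g, ENNReal.ofReal a ≤ (μ : Measure (G → Bool)) (U g) := fun g => by
      rw [← ProbabilityMeasure.ennreal_coeFn_eq_coeFn_toMeasure, ← ENNReal.ofReal_coe_nnreal]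
      exact ENNReal.ofReal_le_ofReal (hμ g)
    calc ENNReal.ofReal (a * (b - 1 / ((m : ℝ) + 1)))
        ≤ ENNReal.ofReal (a * ((S m).card / (L m).card)) := by
          gcongr
          rw [← hS]
          exact hLB m
      _ = (∑ g ∈ S m, ENNReal.ofReal a) * ((L m).card : ENNReal)⁻¹ := by
          rw [ENNReal.ofReal_mul hA.le, ENNReal.ofReal_div_of_pos hpos, ENNReal.ofReal_natCast,
            ENNReal.ofReal_natCast, Finset.sum_const, nsmul_eq_mul, div_eq_mul_inv]
          ring
      _ ≤ (∑ g ∈ S m, (μ : Measure (G → Bool)) (U g)) * ((L m).card : ENNReal)⁻¹ := by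
          gcongr with g
          exact h1 g
      _ = ∫⁻ D, f m D ∂(μ : Measure (G → Bool)) := by
          rw [lintegral_mul_const _
            (Finset.measurable_fun_sum _ fun g _ => measurable_one.indicator (hU g)),
            lintegral_finsetSum _ fun g _ => measurable_one.indicator (hU g)]
          simp [lintegral_indicator_one (hU _)]
  have hlim : Tendsto (fun m : ℕ => ENNReal.ofReal (a * (b - 1 / ((m : ℝ) + 1)))) atTop
      (𝓝 (ENNReal.ofReal (a * b))) := by
    refine ENNReal.tendsto_ofReal ?_
    simpa using (tendsto_one_div_add_atTop_nhds_zero_nat (𝕜 := ℝ)).const_sub b |>.const_mul a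
  have hfatou : ENNReal.ofReal (a * b) ≤
      ∫⁻ D, limsup (fun m => f m D) atTop ∂(μ : Measure (G → Bool)) := by
    rw [← hlim.limsup_eq]
    exact (limsup_le_limsup (Eventually.of_forall hint)).trans
      (limsup_lintegral_le 1 hfm (fun m => Eventually.of_forall (hf1 m)) (by simp))
  have hfin : ∫⁻ D, limsup (fun m => f m D) atTop ∂(μ : Measure (G → Bool)) ≠ ⊤ := by
    refine ne_top_of_le_ne_top ENNReal.one_ne_top ?_
    calc _ ≤ ∫⁻ _, 1 ∂(μ : Measure (G → Bool)) :=
          lintegral_mono fun D => limsup_le_of_le (h := Eventually.of_forall fun m => hf1 m D)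
      _ = 1 := by simp
  obtain ⟨D, hDN, hD⟩ := exists_notMem_null_lintegral_le hfin (ae_iff.1 hae)
  have hDA : FinEmbeddable {g | D g = true} A := by simpa using hDN
  refine ⟨{g | D g = true} ∩ B, Set.inter_subset_right,
    (finEmbeddable_of_subset Set.inter_subset_left).trans hDA, ?_⟩
  refine le_of_forall_lt fun c hc => ?_
  obtain ⟨c', hcc', hc'⟩ := exists_between hc
  refine hcc'.trans_le (le_banachDensity fun H ε hε => ?_)
  rcases lt_or_ge c' 0 with hneg | hc0
  · obtain ⟨K, hK, h⟩ := zero_mem_density hG ({g | D g = true} ∩ B) H ε hε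
    exact ⟨K, hK, hneg.le.trans h⟩
  have hlt : ENNReal.ofReal c' < limsup (fun m => f m D) atTop :=
    (((ENNReal.ofReal_lt_ofReal_iff (hc0.trans_lt hc')).2 hc').trans_le hfatou).trans_le hD
  obtain ⟨m, hm, hm'⟩ := ((frequently_lt_of_lt_limsup (h := hlt)).and_eventually
    (hL H ε hε)).exists
  refine ⟨L m, hm', ?_⟩
  rw [hfval] at hm
  exact ((ENNReal.ofReal_lt_ofReal_iff_of_nonneg hc0).1 hm).le

lemma exists_common (hG : IsAmenable G) (n : ℕ) (A : Fin n → Set G)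
    (hpos : ∀ i, 0 < banachDensity (A i)) :
    ∃ B : Set G, (∏ i, banachDensity (A i)) ≤ banachDensity B ∧ ∀ i, FinEmbeddable B (A i) := by
  induction n with
  | zero => exact ⟨Set.univ, by simpa using one_le_banachDensity_univ hG, fun i => i.elim0⟩
  | succ n ih =>
    obtain ⟨B, hB, hBA⟩ := ih (fun i => A i.succ) fun i => hpos _
    obtain ⟨C, hCB, hCA, hC⟩ := exists_step hG (A 0) B (hpos 0)
    refine ⟨C, ?_, fun i => ?_⟩
    · rw [Fin.prod_univ_succ]
      exact (mul_le_mul_of_nonneg_left hB (hpos 0).le).trans hC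
    · refine Fin.cases hCA (fun j => ?_) i
      exact (finEmbeddable_of_subset hCB).trans (hBA j)

end Correspondence

/-- Theorem 4.2. If `G` is a countable amenable group and `A_1, …, A_n ⊆ G` have positive
Banach densities `d(A_i) = α_i`, then there is `B ⊆ G` with `d(B) ≥ α_1⋯α_n` and `B ◁ A_i`
for each `i`; consequently `BB⁻¹ ⊆ ⋂ᵢ A_iA_i⁻¹` and `Δ_ε(B) ⊆ ⋂ᵢ Δ_ε(A_i)` for all `ε ≥ 0`. -/
theorem stmt10 {G : Type*} [Group G] [DecidableEq G] [Countable G] (hG : IsAmenable G)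
    (n : ℕ) (A : Fin n → Set G) (α : Fin n → ℝ)
    (hpos : ∀ i, 0 < α i) (hd : ∀ i, banachDensity (A i) = α i) :
    ∃ B : Set G, (∏ i, α i) ≤ banachDensity B ∧ (∀ i, FinEmbeddable B (A i)) ∧
      B * B⁻¹ ⊆ (⋂ i, A i * (A i)⁻¹) ∧
      ∀ ε : ℝ, 0 ≤ ε → deltaSet ε B ⊆ ⋂ i, deltaSet ε (A i) := by
  obtain ⟨B, hB, hBA⟩ := exists_common hG n A fun i => by rw [hd]; exact hpos i
  refine ⟨B, by simpa only [hd] using hB, hBA,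
    Set.subset_iInter fun i => (hBA i).mul_inv_subset, fun ε _ => ?_⟩
  exact Set.subset_iInter fun i g hg =>
    lt_of_lt_of_le hg (((hBA i).inter_translate g).banachDensity_le hG)
end
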